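/- The sum over n from 1 to infinity of (H_{n-1}/(n·4^n))·C(2n,n) equals π²/6 + 2·(ln 2)². -/

import Mathlib

open Finset Real

noncomputable def H (n : ℕ) : ℝ := ∑ i ∈ Finset.range n, 1/((i:ℝ)+1)

noncomputable def H2 (n : ℕ) : ℝ := ∑ i ∈ Finset.range n, 1/((i:ℝ)+1)^2

noncomputable def H3 (n : ℕ) : ℝ := ∑ i ∈ Finset.range n, 1/((i:ℝ)+1)^3

noncomputable def hh (r n : ℕ) : ℝ := (Nat.choose (n+r-1) (r-1)) * (H (n+r-1) - H (r-1))

noncomputable def zeta3 : ℝ := ∑' n : ℕ, 1/((n:ℝ)+1)^3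

open Filter Topology

/-- The ratio `(1/2)_n / (k+1)_n` of rising factorials. -/
noncomputable def pochRatio (k n : ℕ) : ℝ :=
  ∏ i ∈ Finset.range n, ((i : ℝ) + 1 / 2) / ((i : ℝ) + 1 + k)

/-- The terms `(1/2)_m / ((k+1)_m m)`, with `m = n + 1`. -/
noncomputable def gaussTerm (k n : ℕ) : ℝ := pochRatio k (n + 1) / ((n : ℝ) + 1)

lemma pochRatio_succ (k n : ℕ) :
    pochRatio k (n + 1) = pochRatio k n * (((n : ℝ) + 1 / 2) / ((n : ℝ) + 1 + k)) :=
  Finset.prod_range_succ _ _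

lemma pochRatio_nonneg (k n : ℕ) : 0 ≤ pochRatio k n :=
  Finset.prod_nonneg fun _ _ => by positivity

lemma pochRatio_shift (k n : ℕ) :
    pochRatio (k + 1) n = pochRatio k n * (((k : ℝ) + 1) / ((n : ℝ) + 1 + k)) := by
  induction n with
  | zero =>
    have : (k : ℝ) + 1 ≠ 0 := by positivity
    simp [pochRatio, add_comm (1 : ℝ), this]
  | succ n ih =>
    rw [pochRatio_succ, pochRatio_succ, ih]
    push_cast
    have : (n : ℝ) + 1 + (k + 1) ≠ 0 := by positivity
    field_simp
    ring

lemma pochRatio_succ_le (k n : ℕ) :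
    pochRatio k (n + 1) ≤ pochRatio 0 (n + 1) / ((k : ℝ) + 1) := by
  induction n with
  | zero =>
    apply le_of_eq
    simp [pochRatio]
    field_simp
    ring
  | succ n ih =>
    rw [pochRatio_succ k, pochRatio_succ 0, mul_div_right_comm]
    refine mul_le_mul ih ?_ (by positivity) (div_nonneg (pochRatio_nonneg _ _) (by positivity))
    gcongr
    simp

lemma pochRatio_zero_eq (n : ℕ) :
    pochRatio 0 n = (Nat.choose (2 * n) n : ℝ) / 4 ^ n := by
  change _ = (Nat.centralBinom n : ℝ) / 4 ^ n
  induction n with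
  | zero => simp [pochRatio]
  | succ n ih =>
    have h : ((n : ℝ) + 1) * Nat.centralBinom (n + 1) = 2 * (2 * n + 1) * Nat.centralBinom n := by
      exact_mod_cast Nat.succ_mul_centralBinom_succ n
    rw [pochRatio_succ, ih, pow_succ]
    field_simp
    push_cast
    linear_combination -2 * h

lemma pochRatio_zero_sq_le (n : ℕ) : pochRatio 0 n ^ 2 * ((n : ℝ) + 1) ≤ 1 := by
  induction n with
  | zero => simp [pochRatio]
  | succ n ih =>
    refine le_trans ?_ ih
    rw [pochRatio_succ, mul_pow, mul_assoc]
    refine mul_le_mul_of_nonneg_left ?_ (sq_nonneg _)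
    push_cast
    rw [div_pow, div_mul_eq_mul_div, div_le_iff₀ (by positivity)]
    have : (0 : ℝ) ≤ n := n.cast_nonneg
    nlinarith

lemma pochRatio_zero_le (n : ℕ) : pochRatio 0 n ≤ 1 / √((n : ℝ) + 1) := by
  rw [le_div_iff₀ (by positivity)]
  refine (abs_le_of_sq_le_sq' (b := 1) ?_ zero_le_one).2
  rw [mul_pow, Real.sq_sqrt (by positivity), one_pow]
  exact pochRatio_zero_sq_le n

lemma H_succ (n : ℕ) : H (n + 1) = H n + 1 / ((n : ℝ) + 1) := Finset.sum_range_succ _ _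

lemma H_nonneg (n : ℕ) : 0 ≤ H n := Finset.sum_nonneg fun _ _ => by positivity

lemma H_eq_harmonic (n : ℕ) : H n = (harmonic n : ℝ) := by
  simp [H, harmonic]

lemma tendsto_H_mul_pochRatio_zero :
    Tendsto (fun n => H n * pochRatio 0 n) atTop (𝓝 0) := by
  have hlog : Tendsto (fun x : ℝ => Real.log x / x ^ (1 / 2 : ℝ)) atTop (𝓝 0) :=
    (isLittleO_log_rpow_atTop (by norm_num)).tendsto_div_nhds_zero
  have hinv : Tendsto (fun x : ℝ => 1 / √x) atTop (𝓝 0) :=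
    tendsto_const_nhds.div_atTop Real.tendsto_sqrt_atTop
  have hcast : Tendsto (fun n : ℕ => (n : ℝ) + 1) atTop atTop :=
    tendsto_atTop_add_const_right _ _ tendsto_natCast_atTop_atTop
  have hsum := (hinv.add hlog).comp hcast
  rw [add_zero] at hsum
  refine squeeze_zero (fun n => mul_nonneg (H_nonneg n) (pochRatio_nonneg 0 n)) (fun n => ?_) hsum
  have hH : H n ≤ 1 + Real.log ((n : ℝ) + 1) := by
    rw [H_eq_harmonic]
    refine (harmonic_le_one_add_log n).trans ?_
    rcases Nat.eq_zero_or_pos n with rfl | hn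
    · simp
    · gcongr
      linarith
  have := mul_le_mul hH (pochRatio_zero_le n) (pochRatio_nonneg 0 n) ((H_nonneg n).trans hH)
  simp only [Function.comp, ← Real.sqrt_eq_rpow]
  rw [← add_div]
  rwa [mul_one_div] at this

lemma tendsto_H_mul_pochRatio (k : ℕ) :
    Tendsto (fun n => H n * pochRatio k (n + 1)) atTop (𝓝 0) := by
  refine squeeze_zero (fun n => mul_nonneg (H_nonneg n) (pochRatio_nonneg _ _)) (fun n => ?_)
    (tendsto_H_mul_pochRatio_zero.comp (tendsto_add_atTop_nat 1))
  refine mul_le_mul ?_ ?_ (pochRatio_nonneg _ _) (H_nonneg _)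
  · rw [H_succ]
    exact le_add_of_nonneg_right (by positivity)
  · refine (pochRatio_succ_le k n).trans (div_le_self (pochRatio_nonneg _ _) ?_)
    simp

lemma tendsto_pochRatio (k : ℕ) : Tendsto (fun n => pochRatio k (n + 1)) atTop (𝓝 0) := by
  refine squeeze_zero' (Eventually.of_forall fun n => pochRatio_nonneg _ _) ?_
    (tendsto_H_mul_pochRatio k)
  filter_upwards [eventually_ge_atTop 1] with n hn
  refine le_mul_of_one_le_left (pochRatio_nonneg _ _) ?_
  obtain ⟨m, rfl⟩ := Nat.exists_eq_add_of_le' hn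
  have : H 1 ≤ H (m + 1) :=
    Finset.sum_le_sum_of_subset_of_nonneg (by simp) fun _ _ _ => by positivity
  simpa [H] using this

lemma gaussTerm_nonneg (k n : ℕ) : 0 ≤ gaussTerm k n :=
  div_nonneg (pochRatio_nonneg _ _) (by positivity)

lemma gaussTerm_le (k n : ℕ) : gaussTerm k n ≤ gaussTerm 0 n / ((k : ℝ) + 1) := by
  rw [gaussTerm, gaussTerm, div_right_comm]
  gcongr
  exact pochRatio_succ_le k n

lemma gaussTerm_zero_le (n : ℕ) :
    gaussTerm 0 n ≤ 2 * (pochRatio 0 n - pochRatio 0 (n + 1)) := by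
  have h := pochRatio_nonneg 0 n
  rw [gaussTerm, pochRatio_succ, ← sub_nonneg]
  have : 2 * (pochRatio 0 n - pochRatio 0 n * (((n : ℝ) + 1 / 2) / ((n : ℝ) + 1 + (0 : ℕ)))) -
      pochRatio 0 n * (((n : ℝ) + 1 / 2) / ((n : ℝ) + 1 + (0 : ℕ))) / ((n : ℝ) + 1) =
      pochRatio 0 n / (2 * ((n : ℝ) + 1) ^ 2) := by
    push_cast
    field_simp
    ring
  rw [this]
  positivity

lemma sum_gaussTerm_zero_le (N : ℕ) : ∑ n ∈ Finset.range N, gaussTerm 0 n ≤ 2 := by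
  refine (Finset.sum_le_sum fun n _ => gaussTerm_zero_le n).trans ?_
  rw [← Finset.mul_sum, Finset.sum_range_sub']
  have := pochRatio_nonneg 0 N
  have h0 : pochRatio 0 0 = 1 := by simp [pochRatio]
  linarith

lemma sum_H_mul_sub (a : ℕ → ℝ) (N : ℕ) :
    ∑ n ∈ Finset.range N, H n * (a n - a (n + 1)) =
      ∑ n ∈ Finset.range N, a (n + 1) / ((n : ℝ) + 1) - H N * a N := by
  induction N with
  | zero => simp [H]
  | succ N ih =>
    rw [Finset.sum_range_succ, Finset.sum_range_succ, ih, H_succ]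
    ring

lemma sum_H_mul_gaussTerm_zero_le (N : ℕ) :
    ∑ n ∈ Finset.range N, H n * gaussTerm 0 n ≤ 4 := by
  calc ∑ n ∈ Finset.range N, H n * gaussTerm 0 n
      ≤ ∑ n ∈ Finset.range N, 2 * (H n * (pochRatio 0 n - pochRatio 0 (n + 1))) := by
        refine Finset.sum_le_sum fun n _ => ?_
        rw [mul_left_comm]
        exact mul_le_mul_of_nonneg_left (gaussTerm_zero_le n) (H_nonneg n)
    _ = 2 * (∑ n ∈ Finset.range N, gaussTerm 0 n - H N * pochRatio 0 N) := by
        rw [← Finset.mul_sum, sum_H_mul_sub]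
        rfl
    _ ≤ 4 := by
        have := sum_gaussTerm_zero_le N
        have := mul_nonneg (H_nonneg N) (pochRatio_nonneg 0 N)
        linarith

lemma summable_gaussTerm (k : ℕ) : Summable (gaussTerm k) :=
  ((summable_of_sum_range_le (gaussTerm_nonneg 0) sum_gaussTerm_zero_le).div_const
    ((k : ℝ) + 1)).of_nonneg_of_le (gaussTerm_nonneg k) (gaussTerm_le k)

lemma H_mul_gaussTerm_le (k n : ℕ) :
    H n * gaussTerm k n ≤ H n * gaussTerm 0 n / ((k : ℝ) + 1) := by
  rw [mul_div_assoc]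
  exact mul_le_mul_of_nonneg_left (gaussTerm_le k n) (H_nonneg n)

lemma summable_H_mul_gaussTerm (k : ℕ) : Summable fun n => H n * gaussTerm k n :=
  ((summable_of_sum_range_le (fun n => mul_nonneg (H_nonneg n) (gaussTerm_nonneg 0 n))
    sum_H_mul_gaussTerm_zero_le).div_const ((k : ℝ) + 1)).of_nonneg_of_le
    (fun n => mul_nonneg (H_nonneg n) (gaussTerm_nonneg k n)) (H_mul_gaussTerm_le k)

lemma tendsto_tsum_of_le_div {f : ℕ → ℕ → ℝ} (hf : ∀ k, Summable (f k))
    (hnonneg : ∀ k n, 0 ≤ f k n) (hle : ∀ k n, f k n ≤ f 0 n / ((k : ℝ) + 1)) :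
    Tendsto (fun k => ∑' n, f k n) atTop (𝓝 0) := by
  refine squeeze_zero (fun k => tsum_nonneg (hnonneg k)) (fun k => ?_)
    ((tendsto_const_nhds (x := ∑' n, f 0 n)).div_atTop
      (tendsto_atTop_add_const_right _ (1 : ℝ) tendsto_natCast_atTop_atTop))
  rw [← tsum_div_const]
  exact (hf k).tsum_le_tsum (hle k) ((hf 0).div_const _)

lemma gaussTerm_sub_shift (k n : ℕ) :
    gaussTerm k n - gaussTerm (k + 1) n =
      (pochRatio k (n + 1) - pochRatio k (n + 2)) / ((k : ℝ) + 1 / 2) := by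
  rw [gaussTerm, gaussTerm, pochRatio_shift, pochRatio_succ k (n + 1)]
  push_cast
  have : (n : ℝ) + 1 + 1 + k ≠ 0 := by positivity
  field_simp
  ring

lemma tsum_gaussTerm_sub (k : ℕ) :
    ∑' n, gaussTerm k n - ∑' n, gaussTerm (k + 1) n =
      1 / ((k : ℝ) + 1 / 2) - 1 / ((k : ℝ) + 1) := by
  rw [← (summable_gaussTerm k).tsum_sub (summable_gaussTerm (k + 1))]
  have hsum := ((summable_gaussTerm k).sub (summable_gaussTerm (k + 1))).hasSum.tendsto_sum_nat
  refine tendsto_nhds_unique hsum ?_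
  simp_rw [gaussTerm_sub_shift, ← Finset.sum_div,
    Finset.sum_range_sub' (fun n => pochRatio k (n + 1))]
  have h := ((tendsto_pochRatio k).const_sub (pochRatio k (0 + 1))).div_const ((k : ℝ) + 1 / 2)
  convert h using 2
  simp [pochRatio]
  have : (1 : ℝ) + k ≠ 0 := by positivity
  field_simp
  ring

lemma pochRatio_div_eq (k n : ℕ) :
    pochRatio k (n + 1 + 1) / ((n : ℝ) + 1) =
      gaussTerm k n - ((k : ℝ) + 1 / 2) / ((k : ℝ) + 1) * gaussTerm (k + 1) n := by
  rw [gaussTerm, gaussTerm, pochRatio_shift, pochRatio_succ k (n + 1)]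
  push_cast
  have : (n : ℝ) + 1 + 1 + k ≠ 0 := by positivity
  field_simp
  ring

lemma tsum_H_mul_gaussTerm_sub (k : ℕ) :
    ∑' n, H n * gaussTerm k n - ∑' n, H n * gaussTerm (k + 1) n =
      (∑' n, gaussTerm k n) / ((k : ℝ) + 1 / 2) - (∑' n, gaussTerm (k + 1) n) / ((k : ℝ) + 1) := by
  rw [← (summable_H_mul_gaussTerm k).tsum_sub (summable_H_mul_gaussTerm (k + 1))]
  have hsum := ((summable_H_mul_gaussTerm k).sub
    (summable_H_mul_gaussTerm (k + 1))).hasSum.tendsto_sum_nat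
  refine tendsto_nhds_unique hsum ?_
  simp_rw [← mul_sub, gaussTerm_sub_shift, mul_div_assoc', ← Finset.sum_div,
    sum_H_mul_sub (fun n => pochRatio k (n + 1)), pochRatio_div_eq]
  have h := ((((summable_gaussTerm k).hasSum.sub
    ((summable_gaussTerm (k + 1)).hasSum.mul_left
      (((k : ℝ) + 1 / 2) / ((k : ℝ) + 1)))).tendsto_sum_nat).sub
    (tendsto_H_mul_pochRatio k)).div_const ((k : ℝ) + 1 / 2)
  convert h using 2
  field_simp
  ring

lemma sum_range_sub_eq_H (N : ℕ) :
    ∑ k ∈ Finset.range N, (1 / ((k : ℝ) + 1 / 2) - 1 / ((k : ℝ) + 1)) =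
      2 * (H (2 * N) - H N) := by
  induction N with
  | zero => simp [H]
  | succ N ih =>
    rw [Finset.sum_range_succ, ih, mul_add, H_succ N]
    change _ = 2 * (H (2 * N + 1 + 1) - _)
    rw [H_succ, H_succ]
    push_cast
    field_simp
    ring

lemma tendsto_H_two_mul_sub : Tendsto (fun N => H (2 * N) - H N) atTop (𝓝 (Real.log 2)) := by
  have h := Real.tendsto_harmonic_sub_log
  have h2 := h.comp (tendsto_id.const_mul_atTop' (two_pos : 0 < 2))
  have h3 := (h2.sub h).add_const (Real.log 2)
  rw [sub_self, zero_add] at h3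
  refine h3.congr' ?_
  filter_upwards [eventually_gt_atTop 0] with N hN
  have hN' : (N : ℝ) ≠ 0 := by positivity
  simp only [Function.comp, id, H_eq_harmonic]
  push_cast
  rw [Real.log_mul two_ne_zero hN']
  ring

lemma tendsto_sum_range_of_sub {a d : ℕ → ℝ} (ha : Tendsto a atTop (𝓝 0))
    (had : ∀ k, a k - a (k + 1) = d k) :
    Tendsto (fun N => ∑ k ∈ Finset.range N, d k) atTop (𝓝 (a 0)) := by
  simp_rw [← had, Finset.sum_range_sub' a]
  simpa using ha.const_sub (a 0)

lemma tsum_gaussTerm_zero : ∑' n, gaussTerm 0 n = 2 * Real.log 2 := by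
  refine tendsto_nhds_unique (tendsto_sum_range_of_sub
    (tendsto_tsum_of_le_div summable_gaussTerm gaussTerm_nonneg gaussTerm_le)
    tsum_gaussTerm_sub) ?_
  simp_rw [sum_range_sub_eq_H]
  exact tendsto_H_two_mul_sub.const_mul 2

lemma hasSum_one_div_add_one_sq :
    HasSum (fun k : ℕ => 1 / ((k : ℝ) + 1) ^ 2) (Real.pi ^ 2 / 6) := by
  have h := (hasSum_nat_add_iff' 1).mpr hasSum_zeta_two
  simpa using h

lemma hasSum_one_div_add_half_sq :
    HasSum (fun k : ℕ => 1 / ((k : ℝ) + 1 / 2) ^ 2) (Real.pi ^ 2 / 2) := by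
  have hinj : Function.Injective fun k : ℕ => 2 * k + 1 := fun a b h => by simpa using h
  have hodd : Summable fun k : ℕ => 1 / (((2 * k + 1 : ℕ) : ℝ)) ^ 2 :=
    hasSum_zeta_two.summable.comp_injective hinj
  have heven : HasSum (fun k : ℕ => 1 / (((2 * k : ℕ) : ℝ)) ^ 2) (Real.pi ^ 2 / 6 / 4) := by
    refine (hasSum_zeta_two.div_const 4).congr_fun fun k => ?_
    push_cast
    ring
  have htot := (heven.even_add_odd (f := fun n : ℕ => 1 / (n : ℝ) ^ 2) hodd.hasSum).unique
    hasSum_zeta_two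
  have h := hodd.hasSum.mul_left 4
  rw [show ∑' k : ℕ, 1 / (((2 * k + 1 : ℕ) : ℝ)) ^ 2 = Real.pi ^ 2 / 8 by linarith] at h
  rw [show 4 * (Real.pi ^ 2 / 8) = Real.pi ^ 2 / 2 by ring] at h
  refine h.congr_fun fun k => ?_
  push_cast
  field_simp
  ring

lemma tsum_H_mul_gaussTerm_zero :
    ∑' n, H n * gaussTerm 0 n = Real.pi ^ 2 / 6 + 2 * Real.log 2 ^ 2 := by
  have hG := tendsto_tsum_of_le_div summable_gaussTerm gaussTerm_nonneg gaussTerm_le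
  have hS := tendsto_tsum_of_le_div summable_H_mul_gaussTerm
    (fun k n => mul_nonneg (H_nonneg n) (gaussTerm_nonneg k n)) H_mul_gaussTerm_le
  have hT := hS.sub ((hG.pow 2).div_const 2)
  rw [zero_pow two_ne_zero, zero_div, sub_zero] at hT
  have hlim := tendsto_sum_range_of_sub hT
    (d := fun k : ℕ => (1 / ((k : ℝ) + 1 / 2) ^ 2 - 1 / ((k : ℝ) + 1) ^ 2) / 2) fun k => by
      have h1 := tsum_gaussTerm_sub k
      have h2 := tsum_H_mul_gaussTerm_sub k
      simp only [div_eq_mul_inv, one_mul, ← inv_pow] at h1 h2 ⊢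
      set x := ((k : ℝ) + 2⁻¹)⁻¹
      set y := ((k : ℝ) + 1)⁻¹
      set u := ∑' n, gaussTerm k n
      set v := ∑' n, gaussTerm (k + 1) n
      linear_combination h2 + ((x + y) / 2 - (u + v) / 2) * h1
  have h := tendsto_nhds_unique hlim
    ((hasSum_one_div_add_half_sq.sub hasSum_one_div_add_one_sq).div_const 2).tendsto_sum_nat
  rw [tsum_gaussTerm_zero] at h
  linarith

theorem stmt1 :
    ∑' n : ℕ, (H n / (((n:ℝ)+1) * 4^(n+1))) * (Nat.choose (2*(n+1)) (n+1) : ℝ)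
      = Real.pi^2/6 + 2 * (Real.log 2)^2 := by
  rw [← tsum_H_mul_gaussTerm_zero]
  refine tsum_congr fun n => ?_
  rw [gaussTerm, pochRatio_zero_eq]
  field_simp
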